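/- If in the definition of maximum RPS entropy the permutation number P(N,i) is replaced by the binomial coefficient C(N,i) and F(i) is replaced by ∑_{k=0}^{i} C(i,k) = 2^i, then log(∑_{i=1}^{N} C(N,i)(2^i - 1)) equals the maximum Deng entropy; i.e., the order-ignoring degeneration of max RPS entropy is max Deng entropy. -/

import Mathlib

open Finset

/-- Replacing P(N,i) by C(N,i) and F(i) by ∑_{k=0}^i C(i,k) = 2^i in the
maximum RPS entropy formula yields the maximum Deng entropy. -/
theorem order_ignoring_degeneration (α : Type*) [Fintype α] [DecidableEq α] (N : ℕ)
    (hN : Fintype.card α = N) :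
    (∀ i : ℕ, ∑ k ∈ Finset.range (i + 1), i.choose k = 2 ^ i) ∧
    Real.log ((∑ i ∈ Finset.Icc 1 N, N.choose i * (2 ^ i - 1 : ℕ) : ℝ))
      = Real.log ((∑ A ∈ Finset.univ.powerset.filter (· ≠ (∅ : Finset α)),
          (2 ^ A.card - 1 : ℕ) : ℝ)) := by
  refine ⟨fun i => Nat.sum_range_choose i, ?_⟩
  congr 1
  have h1 : (∑ A ∈ (Finset.univ : Finset α).powerset.filter (· ≠ (∅ : Finset α)),
      ((2 ^ A.card - 1 : ℕ) : ℝ)) =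
      ∑ A ∈ (Finset.univ : Finset α).powerset, ((2 ^ A.card - 1 : ℕ) : ℝ) := by
    apply Finset.sum_filter_of_ne
    rintro A - h rfl
    simp at h
  rw [h1, Finset.sum_powerset_apply_card (fun m => ((2 ^ m - 1 : ℕ) : ℝ)), Finset.card_univ, hN]
  simp only [nsmul_eq_mul]
  apply Finset.sum_subset
  · intro i hi
    simp only [Finset.mem_Icc, Finset.mem_range] at *
    omega
  · intro i hi hi'
    simp only [Finset.mem_Icc, Finset.mem_range] at *
    have : i = 0 := by omega
    subst this
    simp
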